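/- Let n ≥ 1 and f : Fin n → R := MvPolynomial ℂ (Fin 2), and set F := ∏ i, f i. Assume that for every i the quotient A ⧸ Ideal.span {ι(f i), ι(i_{f i})} is a finite-dimensional ℂ-vector space, and that for all i ≠ j the quotient A ⧸ Ideal.span {ι(f i), ι(f j)} is a finite-dimensional ℂ-vector space. Then A ⧸ Ideal.span {ι F, ι(i_F)} is finite-dimensional and m₀(F, i_F) = (∑ i, m₀(f i, i_{f i})) + 6·(∑_{i < j} m₀(f i, f j)). -/

import Mathlib

open MvPolynomial

noncomputable section

/-- Partial derivative with respect to the first variable `X`. -/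
def dx (f : MvPolynomial (Fin 2) ℂ) : MvPolynomial (Fin 2) ℂ := pderiv 0 f

/-- Partial derivative with respect to the second variable `Y`. -/
def dy (f : MvPolynomial (Fin 2) ℂ) : MvPolynomial (Fin 2) ℂ := pderiv 1 f

/-- The inflection polynomial `i_f = f_y²·f_xx − 2·f_x·f_y·f_xy + f_x²·f_yy`. -/
def infl (f : MvPolynomial (Fin 2) ℂ) : MvPolynomial (Fin 2) ℂ :=
  (dy f) ^ 2 * dx (dx f) - 2 * dx f * dy f * dy (dx f) + (dx f) ^ 2 * dy (dy f)

/-- The vertex polynomial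
`v_f = (f_x² + f_y²)(f_x³ f_yyy − 3 f_x² f_y f_xyy + 3 f_x f_y² f_xxy − f_y³ f_xxx)
      − 3((f_x² − f_y²) f_xy − f_x f_y (f_xx − f_yy)) · i_f`. -/
def vert (f : MvPolynomial (Fin 2) ℂ) : MvPolynomial (Fin 2) ℂ :=
  ((dx f) ^ 2 + (dy f) ^ 2) *
      ((dx f) ^ 3 * dy (dy (dy f)) - 3 * (dx f) ^ 2 * dy f * dy (dy (dx f)) +
        3 * dx f * (dy f) ^ 2 * dy (dx (dx f)) - (dy f) ^ 3 * dx (dx (dx f))) -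
    3 * (((dx f) ^ 2 - (dy f) ^ 2) * dy (dx f) - dx f * dy f * (dx (dx f) - dy (dy f))) *
      infl f

/-- The canonical map from polynomials to formal power series in two variables. -/
def ι : MvPolynomial (Fin 2) ℂ →+* MvPowerSeries (Fin 2) ℂ :=
  MvPolynomial.coeToMvPowerSeries.ringHom

/-- The local intersection number at the origin of the curves `g = 0` and `h = 0`:
the `ℂ`-dimension of `ℂ⟦x,y⟧/⟨g,h⟩`. -/
def interMult (g h : MvPolynomial (Fin 2) ℂ) : ℕ :=
  Module.finrank ℂ (MvPowerSeries (Fin 2) ℂ ⧸ Ideal.span {ι g, ι h})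

end

/-!
Let `A = K⟦x, y⟧` and measure the intersection of `g` and `h` by the length of `A ⧸ (g, h)`, a
value in `ℕ∞`. Multiplication by `g` gives `0 → A ⧸ (f, h) → A ⧸ (f * g, h) → A ⧸ (g, h) → 0`,
which is exact on the left as soon as `A ⧸ (g, h)` has finite length, for then `(g, h)` contains
powers of both variables and so `g` is regular modulo `h`. If `A ⧸ (g, h)` has infinite length,
so does `A ⧸ (f * g, h)`. Hence the intersection length is additive in each argument, as an
identity in `ℕ∞`.

Modulo `f`, the inflection polynomial of `f * g` is `g ^ 3` times that of `f`. Writing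
`F = f i * ∏ j ≠ i, f j`, additivity gives
`m(F, i_F) = ∑ i, m(f i, i_F) = ∑ i, (m(f i, i_{f i}) + 3 * ∑ j ≠ i, m(f i, f j))`,
where every unordered pair is counted twice.
-/

section Length

open Pointwise

variable (R : Type*) {A : Type*} [CommRing R] [CommRing A] [Algebra R A]

theorem length_quotient_span_singleton_mul (a : A) {b : A} (hb : b ∈ nonZeroDivisors A) :
    Module.length R (A ⧸ Ideal.span {a * b}) =
      Module.length R (A ⧸ Ideal.span {a}) + Module.length R (A ⧸ Ideal.span {b}) := by
  have smul_span : b • Ideal.span {a} = Ideal.span {a * b} := by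
    rw [mul_comm, ← Submodule.ideal_span_singleton_smul, smul_eq_mul,
      Ideal.span_singleton_mul_span_singleton]
  rw [← smul_span]
  exact Module.length_eq_add_of_exact
    ((Ideal.mulQuot b (Ideal.span {a})).restrictScalars R)
    ((Ideal.quotOfMul b (Ideal.span {a})).restrictScalars R)
    (Ideal.mulQuot_injective _ hb) (Ideal.quotOfMul_surjective _) (Ideal.exact_mulQuot_quotOfMul _)

theorem length_quotient_span_pair (g h : A) :
    Module.length R (A ⧸ Ideal.span {g, h}) =
      Module.length R
        ((A ⧸ Ideal.span {h}) ⧸ Ideal.span {Ideal.Quotient.mk (Ideal.span {h}) g}) := by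
  have e := DoubleQuot.quotQuotEquivQuotSupₐ R (Ideal.span {h}) (Ideal.span {g})
  rw [Ideal.map_span, Set.image_singleton, ← Ideal.span_union, Set.union_singleton] at e
  exact e.toLinearEquiv.length_eq.symm

theorem length_quotient_span_mul_pair (f : A) {g h : A} (hg : ∀ b, h ∣ g * b → h ∣ b) :
    Module.length R (A ⧸ Ideal.span {f * g, h}) =
      Module.length R (A ⧸ Ideal.span {f, h}) + Module.length R (A ⧸ Ideal.span {g, h}) := by
  have mk_g_regular :
      Ideal.Quotient.mk (Ideal.span {h}) g ∈ nonZeroDivisors (A ⧸ Ideal.span {h}) := by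
    refine mem_nonZeroDivisors_iff_left.2 fun x hx => ?_
    obtain ⟨b, rfl⟩ := Ideal.Quotient.mk_surjective x
    rw [← map_mul, Ideal.Quotient.eq_zero_iff_dvd] at hx
    exact (Ideal.Quotient.eq_zero_iff_dvd _ _).2 (hg b hx)
  rw [length_quotient_span_pair, length_quotient_span_pair R f, length_quotient_span_pair R g,
    map_mul]
  exact length_quotient_span_singleton_mul R _ mk_g_regular

end Length

theorem finite_and_finrank_eq_iff_length_eq {K V : Type*} [DivisionRing K] [AddCommGroup V]
    [Module K V] {n : ℕ} :
    Module.Finite K V ∧ Module.finrank K V = n ↔ Module.length K V = n := by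
  constructor
  · rintro ⟨_, rfl⟩
    exact Module.length_eq_finrank K V
  · intro hn
    have finite_length : IsFiniteLength K V :=
      Module.length_ne_top_iff.1 (hn ▸ ENat.natCast_ne_top n)
    have := (isFiniteLength_iff_isNoetherian_isArtinian.1 finite_length).1
    exact ⟨inferInstance, by exact_mod_cast (Module.length_eq_finrank K V).symm.trans hn⟩

/- The ideal `(g, h)` contains the regular sequence `p, q`, hence has grade at least two. -/
theorem dvd_of_dvd_mul_of_mem_span_pair {A : Type*} [CommRing A] [NoZeroDivisors A] {p q g h b : A}
    (hp : p ≠ 0) (hpq : ∀ s, p ∣ s * q → p ∣ s) (hp_mem : p ∈ Ideal.span {g, h})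
    (hq_mem : q ∈ Ideal.span {g, h}) (hb : h ∣ g * b) : h ∣ b := by
  have dvd_mul_of_mem {r : A} (hr : r ∈ Ideal.span {g, h}) : h ∣ r * b := by
    obtain ⟨α, β, rfl⟩ := Ideal.mem_span_pair.1 hr
    rw [add_mul, mul_assoc, mul_right_comm]
    exact dvd_add (hb.mul_left α) (dvd_mul_left h _)
  obtain ⟨u, hu⟩ := dvd_mul_of_mem hp_mem
  obtain ⟨v, hv⟩ := dvd_mul_of_mem hq_mem
  rcases eq_or_ne h 0 with rfl | hh
  · have b_eq_zero : b = 0 := (mul_eq_zero.1 (hu.trans (zero_mul u))).resolve_left hp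
    exact b_eq_zero ▸ dvd_rfl
  · have cross : u * q = p * v := mul_left_cancel₀ hh (by linear_combination p * hv - q * hu)
    obtain ⟨s, rfl⟩ := hpq u ⟨v, cross⟩
    exact ⟨s, mul_left_cancel₀ hp (by linear_combination hu)⟩

theorem X_pow_dvd_of_dvd_mul_X_pow {σ R : Type*} [CommSemiring R] {s t : σ} (hst : s ≠ t)
    {N M : ℕ} {φ : MvPowerSeries σ R}
    (h : MvPowerSeries.X s ^ N ∣ φ * MvPowerSeries.X t ^ M) : MvPowerSeries.X s ^ N ∣ φ := by
  rw [MvPowerSeries.X_pow_dvd_iff] at h ⊢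
  intro m hm
  have coeff_shift := h (m + Finsupp.single t M) (by simpa [hst] using hm)
  rwa [MvPowerSeries.X_pow_eq, MvPowerSeries.coeff_add_mul_monomial, mul_one] at coeff_shift

section IntersectionLength

variable {σ K : Type*} [Field K]

theorem exists_X_pow_mem_of_finite_quotient (I : Ideal (MvPowerSeries σ K))
    [Module.Finite K (MvPowerSeries σ K ⧸ I)] :
    ∃ N : ℕ, ∀ s, MvPowerSeries.X s ^ N ∈ I := by
  have : IsArtinianRing (MvPowerSeries σ K ⧸ I) := .of_finite K _
  obtain ⟨N, hN⟩ := IsLocalRing.exists_maximalIdeal_pow_le_of_isArtinianRing_quotient I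
  refine ⟨N, fun s => hN (Ideal.pow_mem_pow ?_ N)⟩
  simp [IsLocalRing.mem_maximalIdeal, MvPowerSeries.isUnit_iff_constantCoeff]

theorem dvd_of_dvd_mul_of_finite_quotient [Nontrivial σ] {g h b : MvPowerSeries σ K}
    [Module.Finite K (MvPowerSeries σ K ⧸ Ideal.span {g, h})] (hb : h ∣ g * b) : h ∣ b := by
  obtain ⟨s, t, hst⟩ := exists_pair_ne σ
  obtain ⟨N, hN⟩ := exists_X_pow_mem_of_finite_quotient (Ideal.span {g, h})
  have X_ne_zero : (MvPowerSeries.X s : MvPowerSeries σ K) ≠ 0 :=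
    nonZeroDivisors.ne_zero MvPowerSeries.X_mem_nonzeroDivisors
  exact dvd_of_dvd_mul_of_mem_span_pair (pow_ne_zero N X_ne_zero)
    (fun _ => X_pow_dvd_of_dvd_mul_X_pow hst) (hN s) (hN t) hb

/-- The local intersection number at the origin of two formal power series, valued in `ℕ∞` so that
`⊤` records an infinite-dimensional quotient, where `Module.finrank` would give `0`. -/
noncomputable def intersectionLength (g h : MvPowerSeries σ K) : ℕ∞ :=
  Module.length K (MvPowerSeries σ K ⧸ Ideal.span {g, h})

theorem intersectionLength_comm (g h : MvPowerSeries σ K) :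
    intersectionLength g h = intersectionLength h g := by
  rw [intersectionLength, Ideal.span_pair_comm, intersectionLength]

theorem intersectionLength_one_left (h : MvPowerSeries σ K) : intersectionLength 1 h = 0 := by
  have span_eq_top : Ideal.span {1, h} = ⊤ :=
    (Ideal.eq_top_iff_one _).2 (Ideal.subset_span (Set.mem_insert 1 {h}))
  rw [intersectionLength, Module.length_eq_zero_iff, Ideal.Quotient.subsingleton_iff, span_eq_top]

theorem intersectionLength_eq_of_dvd_sub {g h h' : MvPowerSeries σ K} (hdvd : g ∣ h - h') :
    intersectionLength g h = intersectionLength g h' := by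
  obtain ⟨k, hk⟩ := hdvd
  rw [sub_eq_iff_eq_add'.1 hk, mul_comm, intersectionLength, Ideal.span_pair_add_mul_left,
    intersectionLength]

theorem intersectionLength_le_mul_left (f g h : MvPowerSeries σ K) :
    intersectionLength g h ≤ intersectionLength (f * g) h := by
  have span_le : Ideal.span {f * g, h} ≤ Ideal.span {g, h} := by
    refine Ideal.span_le.2 (Set.pair_subset ?_ (Ideal.subset_span (Set.mem_insert_of_mem g rfl)))
    exact Ideal.mul_mem_left _ f (Ideal.subset_span (Set.mem_insert g {h}))
  exact Module.length_le_of_surjective (Ideal.Quotient.factorₐ K span_le).toLinearMap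
    (Ideal.Quotient.factor_surjective span_le)

variable [Nontrivial σ]

theorem intersectionLength_mul_left (f g h : MvPowerSeries σ K) :
    intersectionLength (f * g) h = intersectionLength f h + intersectionLength g h := by
  cases hgh : intersectionLength g h with
  | top =>
    rw [add_top, ← top_le_iff, ← hgh]
    exact intersectionLength_le_mul_left f g h
  | coe n =>
    have : Module.Finite K (MvPowerSeries σ K ⧸ Ideal.span {g, h}) :=
      (finite_and_finrank_eq_iff_length_eq.2 hgh).1
    rw [← hgh]
    exact length_quotient_span_mul_pair K f fun _ => dvd_of_dvd_mul_of_finite_quotient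

theorem intersectionLength_mul_right (f g h : MvPowerSeries σ K) :
    intersectionLength f (g * h) = intersectionLength f g + intersectionLength f h := by
  simp only [intersectionLength_comm f, intersectionLength_mul_left]

theorem intersectionLength_prod_left {α : Type*} (s : Finset α) (f : α → MvPowerSeries σ K)
    (h : MvPowerSeries σ K) :
    intersectionLength (∏ i ∈ s, f i) h = ∑ i ∈ s, intersectionLength (f i) h := by
  induction s using Finset.cons_induction with
  | empty => exact intersectionLength_one_left h
  | cons a s ha ih =>
    rw [Finset.prod_cons, intersectionLength_mul_left, ih, Finset.sum_cons]

theorem intersectionLength_prod_right {α : Type*} (s : Finset α) (f : α → MvPowerSeries σ K)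
    (g : MvPowerSeries σ K) :
    intersectionLength g (∏ i ∈ s, f i) = ∑ i ∈ s, intersectionLength g (f i) := by
  simp only [intersectionLength_comm g, intersectionLength_prod_left]

theorem intersectionLength_pow_right (g h : MvPowerSeries σ K) (n : ℕ) :
    intersectionLength g (h ^ n) = n * intersectionLength g h := by
  simpa using intersectionLength_prod_right (Finset.range n) (fun _ => h) g

end IntersectionLength

section Inflection

variable {R B : Type*} [CommRing R] [CommRing B] [Algebra R B]

/-- The inflection polynomial with two arbitrary derivations in place of `∂/∂x` and `∂/∂y`.
The derivations need not commute: the mixed term is `D₂ (D₁ f)`. -/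
def inflection (D₁ D₂ : Derivation R B B) (f : B) : B :=
  D₂ f ^ 2 * D₁ (D₁ f) - 2 * D₁ f * D₂ f * D₂ (D₁ f) + D₁ f ^ 2 * D₂ (D₂ f)

theorem dvd_inflection_mul_sub (D₁ D₂ : Derivation R B B) (f g : B) :
    f ∣ inflection D₁ D₂ (f * g) - g ^ 3 * inflection D₁ D₂ f := by
  rw [← Ideal.Quotient.eq_zero_iff_dvd]
  have mk_f : Ideal.Quotient.mk (Ideal.span {f}) f = 0 :=
    (Ideal.Quotient.eq_zero_iff_dvd f f).2 dvd_rfl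
  simp only [inflection, Derivation.leibniz, map_add, smul_eq_mul, map_sub, map_mul, map_pow,
    map_ofNat, mk_f]
  ring

variable {σ K : Type*} [Field K] [Nontrivial σ]

theorem intersectionLength_inflection_mul (D₁ D₂ : Derivation R B B)
    (φ : B →+* MvPowerSeries σ K) (f g : B) :
    intersectionLength (φ f) (φ (inflection D₁ D₂ (f * g))) =
      intersectionLength (φ f) (φ (inflection D₁ D₂ f)) +
        3 * intersectionLength (φ f) (φ g) := by
  have inflection_congr : φ f ∣ φ (inflection D₁ D₂ (f * g)) - φ (g ^ 3 * inflection D₁ D₂ f) :=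
    map_sub φ _ _ ▸ map_dvd φ (dvd_inflection_mul_sub D₁ D₂ f g)
  rw [intersectionLength_eq_of_dvd_sub inflection_congr, map_mul, map_pow,
    intersectionLength_mul_right, intersectionLength_pow_right, add_comm, Nat.cast_ofNat]

end Inflection

theorem sum_sum_ne_eq_two_mul_sum_sum_lt {α S : Type*} [Fintype α] [LinearOrder α]
    [NonAssocSemiring S] (m : α → α → S) (hm : ∀ i j, m i j = m j i) :
    ∑ i, ∑ j with j ≠ i, m i j = 2 * ∑ i, ∑ j with i < j, m i j := by
  have split_ne (i : α) :
      ∑ j with j ≠ i, m i j = ∑ j with j < i, m i j + ∑ j with i < j, m i j := by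
    rw [← Finset.sum_union (Finset.disjoint_filter.2 fun j _ hji => hji.not_gt),
      ← Finset.filter_or]
    simp only [ne_iff_lt_or_gt]
  have sum_gt_eq_sum_lt :
      ∑ i, ∑ j with j < i, m i j = ∑ i, ∑ j with i < j, m i j := by
    simp only [Finset.sum_filter]
    rw [Finset.sum_comm]
    simp only [hm]
  rw [Finset.sum_congr rfl fun i _ => split_ne i, Finset.sum_add_distrib, sum_gt_eq_sum_lt,
    two_mul]

theorem inflection_number_of_product_general {R B σ K α : Type*} [CommRing R] [CommRing B]
    [Algebra R B] [Field K] [Nontrivial σ] [Fintype α] [LinearOrder α]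
    (D₁ D₂ : Derivation R B B) (φ : B →+* MvPowerSeries σ K) (f : α → B) :
    intersectionLength (φ (∏ i, f i)) (φ (inflection D₁ D₂ (∏ i, f i))) =
      ∑ i, intersectionLength (φ (f i)) (φ (inflection D₁ D₂ (f i))) +
        6 * ∑ i, ∑ j with i < j, intersectionLength (φ (f i)) (φ (f j)) := by
  have factor (i : α) : intersectionLength (φ (f i)) (φ (inflection D₁ D₂ (∏ j, f j))) =
      intersectionLength (φ (f i)) (φ (inflection D₁ D₂ (f i))) +
        3 * ∑ j with j ≠ i, intersectionLength (φ (f i)) (φ (f j)) := by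
    rw [← Finset.mul_prod_erase _ f (Finset.mem_univ i), intersectionLength_inflection_mul,
      map_prod, intersectionLength_prod_right, Finset.filter_ne']
  rw [map_prod, intersectionLength_prod_left, Finset.sum_congr rfl fun i _ => factor i,
    Finset.sum_add_distrib, ← Finset.mul_sum,
    sum_sum_ne_eq_two_mul_sum_sum_lt _ fun _ _ => intersectionLength_comm _ _, ← mul_assoc]
  norm_num

theorem natCast_interMult {g h : MvPolynomial (Fin 2) ℂ}
    (hfin : FiniteDimensional ℂ (MvPowerSeries (Fin 2) ℂ ⧸ Ideal.span {ι g, ι h})) :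
    (interMult g h : ℕ∞) = intersectionLength (ι g) (ι h) :=
  (finite_and_finrank_eq_iff_length_eq.1 ⟨hfin, rfl⟩).symm

/-- **Theorem 3.3 (inflection part).** If `F = f₁ ⋯ f_n` where each `I_{f_i}` is finite
and the pairwise intersection numbers `m₀(f_i, f_j)` are finite, then `I_F` is finite and
`I_F = Σᵢ I_{f_i} + 6·Σ_{i<j} m₀(f_i, f_j)`. -/
theorem inflection_number_of_product
    (n : ℕ) (hn : 1 ≤ n) (f : Fin n → MvPolynomial (Fin 2) ℂ)
    (hI : ∀ i, FiniteDimensional ℂ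
      (MvPowerSeries (Fin 2) ℂ ⧸ Ideal.span {ι (f i), ι (infl (f i))}))
    (hm : ∀ i j, i ≠ j → FiniteDimensional ℂ
      (MvPowerSeries (Fin 2) ℂ ⧸ Ideal.span {ι (f i), ι (f j)})) :
    FiniteDimensional ℂ (MvPowerSeries (Fin 2) ℂ ⧸
        Ideal.span {ι (∏ i, f i), ι (infl (∏ i, f i))}) ∧
    interMult (∏ i, f i) (infl (∏ i, f i))
      = (∑ i, interMult (f i) (infl (f i)))
        + 6 * ∑ i, ∑ j ∈ Finset.univ.filter (fun j => i < j), interMult (f i) (f j) := by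
  refine finite_and_finrank_eq_iff_length_eq.2
    ((inflection_number_of_product_general (pderiv 0) (pderiv 1) ι f).trans ?_)
  push_cast
  congr! 4 with i _ i _ j hij
  · exact (natCast_interMult (hI i)).symm
  · exact (natCast_interMult (hm i j (Finset.mem_filter.1 hij).2.ne)).symm
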